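/- Let E be a Banach space and (R_t)_{t≥0} a semigroup of linear contractions on C_b(H) with R_t(C_b(H)) ⊆ C_b²(H) for t > 0, satisfying ‖D²R_tφ‖₀ ≤ C₀ t^{-1} ‖φ‖₀ for t ∈ (0,1] and all φ ∈ C_b(H). If f ∈ C_b(H) satisfies ‖R_t f - f‖₀ ≤ N t^{1/2} for t ∈ [0,1], then f belongs to the Zygmund space 𝒞¹(H), i.e., sup_{x, 0<|h|≤1} |f(x+h) - 2f(x) + f(x-h)|/|h| < ∞, with [f]_{𝒞¹} ≤ 16(C₀+1)(N + ‖f‖₀). -/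

import Mathlib

open Real Set

/-- Second differences are controlled by the second derivative. -/
lemma second_diff_le {H : Type*} [NormedAddCommGroup H] [InnerProductSpace ℝ H]
    (g : H → ℝ) (hg : ContDiff ℝ 2 g) (B : ℝ) (hB : ∀ x, ‖iteratedFDeriv ℝ 2 g x‖ ≤ B)
    (x h : H) : |g (x + h) - 2 * g x + g (x - h)| ≤ B * ‖h‖ ^ 2 := by
  have hd : Differentiable ℝ g := hg.differentiable (by norm_num)
  have hd1 : ContDiff ℝ 1 (fderiv ℝ g) := hg.fderiv_right (by norm_num)
  have hd2 : Differentiable ℝ (fderiv ℝ g) := hd1.differentiable (by norm_num)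
  have hb : ∀ y, ‖fderiv ℝ (fderiv ℝ g) y‖ ≤ B := by
    intro y
    have h1 : ‖iteratedFDeriv ℝ 1 (fderiv ℝ g) y‖ = ‖iteratedFDeriv ℝ 2 g y‖ :=
      norm_iteratedFDeriv_fderiv
    rw [norm_iteratedFDeriv_one] at h1
    rw [h1]
    exact hB y
  have hl : ∀ y z, ‖fderiv ℝ g z - fderiv ℝ g y‖ ≤ B * ‖z - y‖ := fun y z =>
    convex_univ.norm_image_sub_le_of_norm_fderiv_le (fun w _ => hd2 w) (fun w _ => hb w)
      (mem_univ _) (mem_univ _)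
  have hu : ∀ y, HasFDerivAt (fun y => g (y + h) - g y) (fderiv ℝ g (y + h) - fderiv ℝ g y) y := by
    intro y
    exact ((hasFDerivAt_comp_add_right h).2 (hd (y + h)).hasFDerivAt).sub (hd y).hasFDerivAt
  have key := convex_univ.norm_image_sub_le_of_norm_hasFDerivWithin_le (C := B * ‖h‖)
    (fun w _ => (hu w).hasFDerivWithinAt)
    (fun w _ => by simpa using hl w (w + h)) (mem_univ (x - h)) (mem_univ x)
  rw [Real.norm_eq_abs] at key
  calc _ = |g (x + h) - g x - (g (x - h + h) - g (x - h))| := by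
        rw [sub_add_cancel]; congr 1; ring
    _ ≤ _ := key
    _ = _ := by rw [sub_sub_cancel]; ring

/-- Zygmund lemma: let `(R_t)` be a semigroup of linear contractions on `C_b(H)`
mapping `C_b(H)` into `C_b²(H)` for `t > 0`, with `‖D²R_tφ‖₀ ≤ C₀ t⁻¹ ‖φ‖₀` for
`t ∈ (0,1]`. If `f ∈ C_b(H)` satisfies `‖R_t f - f‖₀ ≤ N √t` for `t ∈ [0,1]`,
then `f` is in the Zygmund space `𝒞¹(H)`, with
`|f(x+h) - 2f(x) + f(x-h)| ≤ 16(C₀+1)(N + ‖f‖₀)|h|` for `|h| ≤ 1`. -/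
theorem zygmund_lemma
    {H : Type*} [NormedAddCommGroup H] [InnerProductSpace ℝ H]
    (R : ℝ → (H → ℝ) → (H → ℝ))
    (hR0 : ∀ φ, R 0 φ = φ)
    (hRsg : ∀ s t : ℝ, 0 ≤ s → 0 ≤ t → ∀ φ, R (s + t) φ = R s (R t φ))
    (hlin : ∀ t : ℝ, 0 ≤ t → IsLinearMap ℝ (R t))
    (hRcont : ∀ t : ℝ, 0 ≤ t → ∀ φ : H → ℝ, Continuous φ → Continuous (R t φ))
    (hcontr : ∀ t : ℝ, 0 ≤ t → ∀ (φ : H → ℝ) (C : ℝ),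
      (∀ x, |φ x| ≤ C) → ∀ x, |R t φ x| ≤ C)
    (C₀ : ℝ)
    (hsmooth : ∀ φ : H → ℝ, Continuous φ → ∀ t ∈ Ioc (0 : ℝ) 1, ContDiff ℝ 2 (R t φ))
    (hD2 : ∀ (φ : H → ℝ), Continuous φ → ∀ C : ℝ, (∀ x, |φ x| ≤ C) →
      ∀ t ∈ Ioc (0 : ℝ) 1, ∀ x, ‖iteratedFDeriv ℝ 2 (R t φ) x‖ ≤ C₀ / t * C)
    (f : H → ℝ) (hfc : Continuous f) (N Cf : ℝ)
    (hfb : ∀ x, |f x| ≤ Cf)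
    (hN : ∀ t ∈ Icc (0 : ℝ) 1, ∀ x, |R t f x - f x| ≤ N * Real.sqrt t) :
    ∀ x h : H, h ≠ 0 → ‖h‖ ≤ 1 →
      |f (x + h) - 2 * f x + f (x - h)| ≤ 16 * (C₀ + 1) * (N + Cf) * ‖h‖ := by
  intro x h hh hh1
  have hr : 0 < ‖h‖ := norm_pos_iff.2 hh
  have hCf : 0 ≤ Cf := (abs_nonneg _).trans (hfb 0)
  have hN0 : 0 ≤ N := by
    have := (abs_nonneg _).trans (hN 1 (by simp) 0)
    simpa using this
  have hC0 : 0 ≤ C₀ := by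
    have := (norm_nonneg _).trans
      (hD2 (fun _ => 0) continuous_const 1 (by simp) 1 (by simp) (0 : H))
    simpa using this
  have key : ∀ k : ℕ, ∀ s : ℝ, 0 < s → s ≤ 1 → 1 ≤ 2 ^ (k + 1) * s ^ 2 →
      |R (s ^ 2) f (x + h) - 2 * R (s ^ 2) f x + R (s ^ 2) f (x - h)|
        ≤ 4 * C₀ * (N + Cf) / s * ‖h‖ ^ 2 := by
    have base : ∀ s : ℝ, 0 < s → s ≤ 1 → 1 ≤ 2 * s ^ 2 →
      |R (s ^ 2) f (x + h) - 2 * R (s ^ 2) f x + R (s ^ 2) f (x - h)|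
        ≤ 4 * C₀ * (N + Cf) / s * ‖h‖ ^ 2 := by
      intro s hs hs1 hs2
      have ht : s ^ 2 ∈ Ioc (0 : ℝ) 1 := ⟨by positivity, by nlinarith⟩
      refine (second_diff_le _ (hsmooth f hfc _ ht) _ (hD2 f hfc Cf hfb _ ht) x h).trans ?_
      gcongr
      rw [div_mul_eq_mul_div, div_le_div_iff₀ ht.1 hs]
      have h4 : 1 ≤ 4 * s := by nlinarith
      have : C₀ * Cf * s * 1 ≤ C₀ * Cf * s * (4 * s) := by gcongr
      have h5 : 0 ≤ C₀ * N * s ^ 2 := by positivity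
      nlinarith
    intro k
    induction k with
    | zero => intro s hs hs1 hs2; exact base s hs hs1 (by simpa using hs2)
    | succ k ih =>
      intro s hs hs1 hs2
      by_cases hc : 1 ≤ 2 * s ^ 2
      · exact base s hs hs1 hc
      push Not at hc
      have hq : √2 ^ 2 = (2 : ℝ) := Real.sq_sqrt (by norm_num)
      have hq0 : 0 < √(2 : ℝ) := by positivity
      have hq2 : (4 / 3 : ℝ) ≤ √2 := Real.le_sqrt_of_sq_le (by norm_num)
      have e : (√2 * s) ^ 2 = s ^ 2 + s ^ 2 := by rw [mul_pow, hq]; ring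
      have ht : s ^ 2 ∈ Ioc (0 : ℝ) 1 := ⟨by positivity, by nlinarith⟩
      have h1 := ih (√2 * s) (by positivity) (by
        refine (sq_le_one_iff₀ (by positivity)).1 ?_
        rw [e]; linarith) (by rw [e]; rw [pow_succ] at hs2; linarith)
      rw [e, hRsg _ _ ht.1.le ht.1.le] at h1
      have hgc : Continuous (f - R (s ^ 2) f) := hfc.sub (hRcont _ ht.1.le _ hfc)
      have h2 := second_diff_le _ (hsmooth _ hgc _ ht) _ (hD2 _ hgc (N * s) (fun y => by
        have := hN (s ^ 2) ⟨ht.1.le, ht.2⟩ y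
        rw [Real.sqrt_sq hs.le, abs_sub_comm] at this
        exact this) _ ht) x h
      rw [(hlin _ ht.1.le).map_sub] at h2
      simp only [Pi.sub_apply] at h2
      have e2 : C₀ / s ^ 2 * (N * s) = C₀ * N / s := by field_simp
      rw [e2] at h2
      have e3 : C₀ * N / s + 4 * C₀ * (N + Cf) / (√2 * s) ≤ 4 * C₀ * (N + Cf) / s := by
        have : 4 * C₀ * (N + Cf) / (√2 * s) ≤ 4 * C₀ * (N + Cf) / ((4 / 3) * s) := by gcongr
        have e4 : 4 * C₀ * (N + Cf) / ((4 / 3) * s) = 3 * C₀ * (N + Cf) / s := by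
          field_simp
        have e5 : C₀ * N / s + 3 * C₀ * (N + Cf) / s ≤ 4 * C₀ * (N + Cf) / s := by
          rw [← add_div]
          gcongr
          have : 0 ≤ C₀ * Cf := by positivity
          nlinarith
        linarith
      have e6 := mul_le_mul_of_nonneg_right e3 (sq_nonneg ‖h‖)
      rw [add_mul] at e6
      rw [abs_le] at *
      constructor <;> linarith [h1.1, h1.2, h2.1, h2.2]
  obtain ⟨k, hk⟩ := pow_unbounded_of_one_lt (1 / ‖h‖ ^ 2) (one_lt_two (α := ℝ))
  have hk1 : 1 ≤ 2 ^ (k + 1) * ‖h‖ ^ 2 := by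
    rw [div_lt_iff₀ (by positivity)] at hk
    rw [pow_succ]; linarith
  have h1 := key k ‖h‖ hr hh1 hk1
  have e : 4 * C₀ * (N + Cf) / ‖h‖ * ‖h‖ ^ 2 = 4 * C₀ * (N + Cf) * ‖h‖ := by field_simp
  rw [e] at h1
  have hM : ∀ y, |R (‖h‖ ^ 2) f y - f y| ≤ N * ‖h‖ := fun y => by
    have := hN (‖h‖ ^ 2) ⟨by positivity, by nlinarith⟩ y
    rwa [Real.sqrt_sq hr.le] at this
  have a1 := abs_le.1 (hM x)
  have a2 := abs_le.1 (hM (x + h))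
  have a3 := abs_le.1 (hM (x - h))
  have b1 := abs_le.1 h1
  have p1 : 0 ≤ C₀ * (N + Cf) * ‖h‖ := by positivity
  have p2 : 0 ≤ N * ‖h‖ := by positivity
  have p3 : 0 ≤ Cf * ‖h‖ := by positivity
  have e7 : 16 * (C₀ + 1) * (N + Cf) * ‖h‖
    = 16 * (C₀ * (N + Cf) * ‖h‖) + 16 * (N * ‖h‖) + 16 * (Cf * ‖h‖) := by ring
  have e8 : 4 * C₀ * (N + Cf) * ‖h‖ = 4 * (C₀ * (N + Cf) * ‖h‖) := by ring
  rw [e8] at b1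
  rw [e7, abs_le]
  constructor <;> linarith [a1.1, a1.2, a2.1, a2.2, a3.1, a3.2, b1.1, b1.2]
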